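/- arXiv:2503.04427 — 3 statements merged into one kernel-verified Lean document; each statement's English description precedes it below -/
import Mathlib

section
/- Let A ∈ ℂ^{n×n} be Hermitian positive definite with smallest eigenvalue λ_min and largest eigenvalue λ_max, let b ∈ ℂ^n with ‖b‖ = 1, let g be a Stieltjes function and set f(z) := z·g(z), and let m ≥ 1. Let V_m ∈ ℂ^{n×m} have orthonormal columns whose column space equals K_m(A,b), and let f_m := V_m f(V_m* A V_m) V_m* b be the Lanczos approximation. Then for every x ∈ K_m(A,b), ‖f(A)b − f_m‖ ≤ (1 + κ(A)²) ‖f(A)b − x‖, where κ(A) = λ_max/λ_min. -/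
open MeasureTheory Matrix ComplexOrder

/-- A Stieltjes function: `f z = ∫ 1/(z+t) dμ(t)` for `z > 0`, for a positive Borel
measure `μ` on `[0,∞)` with `∫ 1/(1+t) dμ(t) < ∞`. -/
def IsStieltjes (f : ℝ → ℝ) : Prop :=
  ∃ μ : Measure ℝ,
    MeasureTheory.IntegrableOn (fun t => (1 + t)⁻¹) (Set.Ici 0) μ ∧
    ∀ z : ℝ, 0 < z → f z = ∫ t in Set.Ici (0 : ℝ), (z + t)⁻¹ ∂μ

/-- The Krylov subspace `K_m(A,b) = span{b, Ab, …, A^{m-1} b}`. -/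
noncomputable def Krylov {n : ℕ} (A : Matrix (Fin n) (Fin n) ℂ)
    (b : EuclideanSpace ℂ (Fin n)) (m : ℕ) : Submodule ℂ (EuclideanSpace ℂ (Fin n)) :=
  Submodule.span ℂ {v | ∃ i < m, v = Matrix.toEuclideanLin (A ^ i) b}


/-!
Let `p` be the polynomial interpolating `f` at the set `s` of Ritz values and `ν` the nodal
polynomial of `s`. Then `f_m = p(A) b`, and `w = ν(A) b` is orthogonal to `K_m(A, b)`.
For `z / (z + t)` the interpolation error is
`-(-1)^|s| * (t / ∏ θ ∈ s, (θ + t)) * (z + t)⁻¹ * ν z`; integrating in `t` gives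
`f - p = ± h ν` where `h` is again a Stieltjes function. The error is therefore `e = ± h(A) w`, and
since `h` decreases, `‖e‖ ≤ h(λ_min) ‖w‖` while for `x ∈ K_m(A, b)`
`h(λ_max) ‖w‖² ≤ |⟪w, e⟫| = |⟪w, f(A) b - x⟫| ≤ ‖w‖ ‖f(A) b - x‖`.
Since `z h(z)` increases, `h(λ_min) ≤ κ(A) h(λ_max)`, so the error is even within the factor
`κ(A) ≤ 1 + κ(A)²` of the optimum.
-/

section Interpolation

open Polynomial

variable {F ι : Type*} [Field F] [DecidableEq ι] {s : Finset ι} {v : ι → F} {a x : F}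

theorem interpolate_inv_sub_mul_X_sub_C (hv : Set.InjOn v s) (ha : ∀ i ∈ s, v i ≠ a) :
    Lagrange.interpolate s v (fun i ↦ (v i - a)⁻¹) * (X - C a) =
      1 - C ((Lagrange.nodal s v).eval a)⁻¹ * Lagrange.nodal s v := by
  have hnodal : (Lagrange.nodal s v).eval a ≠ 0 :=
    Lagrange.eval_nodal_not_at_node fun i hi ↦ (ha i hi).symm
  obtain ⟨q, hq⟩ : X - C a ∣ 1 - C ((Lagrange.nodal s v).eval a)⁻¹ * Lagrange.nodal s v :=
    dvd_iff_isRoot.2 <| by simp [hnodal]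
  have hq_degree : q.degree < s.card := by
    rcases eq_or_ne q 0 with rfl | hq0
    · simp
    have hle : (1 - C ((Lagrange.nodal s v).eval a)⁻¹ * Lagrange.nodal s v).natDegree ≤ s.card :=
      (natDegree_sub_le_iff_left <| (natDegree_C_mul_le _ _).trans_eq Lagrange.natDegree_nodal).2 <|
        natDegree_one.trans_le s.card.zero_le
    rw [hq, natDegree_mul (X_sub_C_ne_zero a) hq0, natDegree_X_sub_C] at hle
    rw [← natDegree_lt_iff_degree_lt hq0]
    lia
  have hq_eval : ∀ i ∈ s, q.eval (v i) = (v i - a)⁻¹ := fun i hi ↦ by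
    have := congrArg (eval (v i)) hq
    simp only [eval_sub, eval_one, eval_mul, eval_C, eval_X, Lagrange.eval_nodal_at_node hi,
      mul_zero, sub_zero] at this
    exact eq_inv_of_mul_eq_one_right this.symm
  rw [← Lagrange.eq_interpolate_of_eval_eq _ hv hq_degree hq_eval, hq, mul_comm]

theorem inv_sub_sub_eval_interpolate (hv : Set.InjOn v s) (ha : ∀ i ∈ s, v i ≠ a) (hx : x ≠ a) :
    (x - a)⁻¹ - (Lagrange.interpolate s v fun i ↦ (v i - a)⁻¹).eval x =
      ((Lagrange.nodal s v).eval a)⁻¹ * (Lagrange.nodal s v).eval x * (x - a)⁻¹ := by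
  have h := congrArg (eval x) (interpolate_inv_sub_mul_X_sub_C hv ha)
  simp only [eval_mul, eval_sub, eval_X, eval_C, eval_one] at h
  refine mul_right_cancel₀ (sub_ne_zero.2 hx) ?_
  rw [sub_mul, h, mul_assoc, inv_mul_cancel₀ (sub_ne_zero.2 hx)]
  ring

theorem mul_inv_sub_sub_eval_interpolate (hs : s.Nonempty) (hv : Set.InjOn v s)
    (ha : ∀ i ∈ s, v i ≠ a) (hx : x ≠ a) :
    x * (x - a)⁻¹ - (Lagrange.interpolate s v fun i ↦ v i * (v i - a)⁻¹).eval x =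
      a * ((Lagrange.nodal s v).eval a)⁻¹ * (Lagrange.nodal s v).eval x * (x - a)⁻¹ := by
  have hsplit : ∀ y : F, y ≠ a → y * (y - a)⁻¹ = 1 + a * (y - a)⁻¹ := fun y hy ↦ by
    field_simp [sub_ne_zero.2 hy]
    ring
  have hinterp : (Lagrange.interpolate s v fun i ↦ v i * (v i - a)⁻¹) =
      1 + a • Lagrange.interpolate s v fun i ↦ (v i - a)⁻¹ := by
    rw [← Lagrange.interpolate_one hv hs, ← map_smul, ← map_add]
    exact Lagrange.interpolate_eq_of_values_eq_on _ _ fun i hi ↦ hsplit _ (ha i hi)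
  rw [hinterp, hsplit x hx, eval_add, eval_one, eval_smul, smul_eq_mul]
  linear_combination a * inv_sub_sub_eval_interpolate hv ha hx

section Integral

variable {𝕜 X : Type*} [RCLike 𝕜] [MeasurableSpace X] {μ : Measure X} {v : ι → 𝕜} {k : ι → X → 𝕜}

theorem integrable_eval_interpolate (hk : ∀ i ∈ s, Integrable (k i) μ) (x : 𝕜) :
    Integrable (fun t ↦ (Lagrange.interpolate s v fun i ↦ k i t).eval x) μ := by
  simp only [Lagrange.interpolate_apply, eval_finsetSum, eval_mul, eval_C]
  exact integrable_finsetSum _ fun i hi ↦ (hk i hi).mul_const _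

theorem integral_eval_interpolate (hk : ∀ i ∈ s, Integrable (k i) μ) (x : 𝕜) :
    ∫ t, (Lagrange.interpolate s v fun i ↦ k i t).eval x ∂μ =
      (Lagrange.interpolate s v fun i ↦ ∫ t, k i t ∂μ).eval x := by
  simp only [Lagrange.interpolate_apply, eval_finsetSum, eval_mul, eval_C]
  rw [integral_finsetSum _ fun i hi ↦ (hk i hi).mul_const _]
  simp only [integral_mul_const]

end Integral

end Interpolation

section Stieltjes

variable {μ : Measure ℝ} {g : ℝ → ℝ} {z : ℝ}

theorem inv_add_le_mul_inv_one_add {t : ℝ} (hz : 0 < z) (ht : 0 ≤ t) :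
    (z + t)⁻¹ ≤ (1 + z⁻¹) * (1 + t)⁻¹ := by
  rw [← div_eq_mul_inv, inv_eq_one_div, div_le_div_iff₀ (by positivity) (by positivity)]
  have : 0 ≤ z + t / z := by positivity
  calc 1 * (1 + t) ≤ 1 + t + (z + t / z) := by linarith
    _ = (1 + z⁻¹) * (z + t) := by field_simp; ring

theorem integrableOn_inv_add (hμ : IntegrableOn (fun t ↦ (1 + t)⁻¹) (Set.Ici 0) μ) (hz : 0 < z) :
    IntegrableOn (fun t ↦ (z + t)⁻¹) (Set.Ici 0) μ := by
  refine (hμ.const_mul (1 + z⁻¹)).mono' (by fun_prop) ?_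
  filter_upwards [ae_restrict_mem measurableSet_Ici] with t (ht : 0 ≤ t)
  rw [Real.norm_of_nonneg (by positivity)]
  exact inv_add_le_mul_inv_one_add hz ht

theorem IsStieltjes.nonneg (hg : IsStieltjes g) (hz : 0 < z) : 0 ≤ g z := by
  obtain ⟨μ, -, hgμ⟩ := hg
  rw [hgμ z hz]
  refine setIntegral_nonneg measurableSet_Ici fun t (ht : 0 ≤ t) ↦ ?_
  positivity

theorem IsStieltjes.antitoneOn (hg : IsStieltjes g) : AntitoneOn g (Set.Ioi 0) := by
  obtain ⟨μ, hμ, hgμ⟩ := hg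
  intro y (hy : 0 < y) z (hz : 0 < z) hyz
  rw [hgμ y hy, hgμ z hz]
  refine setIntegral_mono_on (integrableOn_inv_add hμ hz) (integrableOn_inv_add hμ hy)
    measurableSet_Ici fun t (ht : 0 ≤ t) ↦ ?_
  gcongr

theorem IsStieltjes.monotoneOn_id_mul (hg : IsStieltjes g) :
    MonotoneOn (fun z ↦ z * g z) (Set.Ioi 0) := by
  obtain ⟨μ, hμ, hgμ⟩ := hg
  intro y (hy : 0 < y) z (hz : 0 < z) hyz
  simp only [hgμ y hy, hgμ z hz, ← integral_const_mul]
  refine setIntegral_mono_on ((integrableOn_inv_add hμ hy).const_mul y)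
    ((integrableOn_inv_add hμ hz).const_mul z) measurableSet_Ici fun t (ht : 0 ≤ t) ↦ ?_
  rw [← div_eq_mul_inv, ← div_eq_mul_inv, div_le_div_iff₀ (by positivity) (by positivity)]
  linarith [mul_le_mul_of_nonneg_right hyz ht]

theorem isStieltjes_setIntegral_mul_inv_add (hμ : IntegrableOn (fun t ↦ (1 + t)⁻¹) (Set.Ici 0) μ)
    {w : ℝ → ℝ} {c : ℝ} (hw : Measurable w) (hw0 : ∀ t, 0 ≤ t → 0 ≤ w t)
    (hwc : ∀ t, 0 ≤ t → w t ≤ c) :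
    IsStieltjes fun z ↦ ∫ t in Set.Ici 0, w t * (z + t)⁻¹ ∂μ := by
  have hw_smul : ∀ z, ∀ t ∈ Set.Ici (0 : ℝ), (w t).toNNReal • (z + t)⁻¹ = w t * (z + t)⁻¹ :=
    fun z t ht ↦ by rw [NNReal.smul_def, Real.coe_toNNReal _ (hw0 t ht), smul_eq_mul]
  refine ⟨μ.withDensity fun t ↦ (w t).toNNReal, ?_, fun z _ ↦ ?_⟩
  · rw [IntegrableOn, restrict_withDensity measurableSet_Ici,
      integrable_withDensity_iff_integrable_smul hw.real_toNNReal]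
    refine (hμ.const_mul c).mono' (by fun_prop) ?_
    filter_upwards [ae_restrict_mem measurableSet_Ici] with t (ht : 0 ≤ t)
    rw [hw_smul 1 t ht, Real.norm_of_nonneg (mul_nonneg (hw0 t ht) (by positivity))]
    gcongr
    exact hwc t ht
  · rw [setIntegral_withDensity_eq_setIntegral_smul hw.real_toNNReal _ measurableSet_Ici]
    exact setIntegral_congr_fun measurableSet_Ici fun t ht ↦ (hw_smul z t ht).symm

theorem mul_inv_prod_add_le {s : Finset ℝ} (hs : ∀ θ ∈ s, 0 < θ) {θ₀ t : ℝ} (hθ₀ : θ₀ ∈ s)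
    (ht : 0 ≤ t) : t * (∏ θ ∈ s, (θ + t))⁻¹ ≤ (∏ θ ∈ s.erase θ₀, θ)⁻¹ := by
  have hs' : ∀ θ ∈ s.erase θ₀, 0 < θ := fun θ hθ ↦ hs θ (Finset.mem_of_mem_erase hθ)
  have hprod : ∏ θ ∈ s.erase θ₀, θ ≤ ∏ θ ∈ s.erase θ₀, (θ + t) :=
    Finset.prod_le_prod (fun θ hθ ↦ (hs' θ hθ).le) fun θ _ ↦ le_add_of_nonneg_right ht
  have hpos : 0 < ∏ θ ∈ s.erase θ₀, θ := Finset.prod_pos hs'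
  have hθ₀_pos := hs θ₀ hθ₀
  calc t * (∏ θ ∈ s, (θ + t))⁻¹ = t / (θ₀ + t) * (∏ θ ∈ s.erase θ₀, (θ + t))⁻¹ := by
        rw [← Finset.mul_prod_erase s _ hθ₀, mul_inv, div_eq_mul_inv, mul_assoc]
    _ ≤ 1 * (∏ θ ∈ s.erase θ₀, θ)⁻¹ := by
        gcongr
        · exact inv_nonneg.2 (hpos.le.trans hprod)
        · exact (div_le_one (add_pos_of_pos_of_nonneg hθ₀_pos ht)).2 (by linarith)
    _ = _ := one_mul _

theorem mul_inv_add_sub_eval_interpolate {s : Finset ℝ} (hne : s.Nonempty) (hs : ∀ θ ∈ s, 0 < θ)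
    (hz : 0 < z) {t : ℝ} (ht : 0 ≤ t) :
    z * (z + t)⁻¹ - (Lagrange.interpolate s id fun θ ↦ θ * (θ + t)⁻¹).eval z =
      t * (∏ θ ∈ s, (θ + t))⁻¹ * (z + t)⁻¹ *
        (-(-1) ^ s.card * (Lagrange.nodal s id).eval z) := by
  have hnodal : (Lagrange.nodal s id).eval (-t) = (-1) ^ s.card * ∏ θ ∈ s, (θ + t) := by
    rw [Lagrange.eval_nodal, ← Finset.prod_const, ← Finset.prod_mul_distrib]
    exact Finset.prod_congr rfl fun θ _ ↦ by rw [id]; ring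
  have h := mul_inv_sub_sub_eval_interpolate (v := id) hne (Set.injOn_id _)
    (fun θ hθ ↦ ((neg_nonpos.2 ht).trans_lt (hs θ hθ)).ne') ((neg_nonpos.2 ht).trans_lt hz).ne'
  simp only [sub_neg_eq_add] at h
  refine h.trans ?_
  rw [hnodal, mul_inv, ← inv_pow, inv_neg_one]
  ring

theorem IsStieltjes.exists_interpolation_error_eq (hg : IsStieltjes g) {s : Finset ℝ}
    (hne : s.Nonempty) (hs : ∀ θ ∈ s, 0 < θ) :
    ∃ h : ℝ → ℝ, IsStieltjes h ∧ ∀ z, 0 < z →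
      z * g z - (Lagrange.interpolate s id fun θ ↦ θ * g θ).eval z =
        h z * (-(-1) ^ s.card * (Lagrange.nodal s id).eval z) := by
  obtain ⟨μ, hμ, hgμ⟩ := hg
  obtain ⟨θ₀, hθ₀⟩ := hne
  have hintegral : ∀ y, 0 < y → y * g y = ∫ t in Set.Ici 0, y * (y + t)⁻¹ ∂μ := fun y hy ↦ by
    rw [hgμ y hy, integral_const_mul]
  have hintegrable : ∀ y, 0 < y → IntegrableOn (fun t ↦ y * (y + t)⁻¹) (Set.Ici 0) μ :=
    fun y hy ↦ (integrableOn_inv_add hμ hy).const_mul y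
  refine ⟨_, isStieltjes_setIntegral_mul_inv_add hμ (w := fun t ↦ t * (∏ θ ∈ s, (θ + t))⁻¹)
    (by fun_prop) (fun t ht ↦ mul_nonneg ht <| inv_nonneg.2 <| Finset.prod_nonneg fun θ hθ ↦
      add_nonneg (hs θ hθ).le ht) fun t ht ↦ mul_inv_prod_add_le hs hθ₀ ht, fun z hz ↦ ?_⟩
  rw [Lagrange.interpolate_eq_of_values_eq_on _ _ fun θ hθ ↦ hintegral θ (hs θ hθ),
    ← integral_eval_interpolate (fun θ hθ ↦ hintegrable θ (hs θ hθ)), hintegral z hz,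
    ← integral_sub (hintegrable z hz)
      (integrable_eval_interpolate (fun θ hθ ↦ hintegrable θ (hs θ hθ)) z), ← integral_mul_const]
  exact setIntegral_congr_fun measurableSet_Ici fun t ht ↦
    mul_inv_add_sub_eval_interpolate ⟨θ₀, hθ₀⟩ hs hz ht

end Stieltjes

section Krylov

open Polynomial

variable {R M N : Type*} [CommRing R] [AddCommGroup M] [Module R M] [AddCommGroup N]
  [Module R N] {T : Module.End R M} {b : M} {m : ℕ}

/-- The Krylov subspace of order `m` generated by `b` under an endomorphism `T`: the
coordinate-free form of `Krylov`. -/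
def krylovSubspace (T : Module.End R M) (b : M) (m : ℕ) : Submodule R M :=
  Submodule.span R {x | ∃ i < m, x = (T ^ i) b}

theorem Krylov_eq_krylovSubspace {n : ℕ} (A : Matrix (Fin n) (Fin n) ℂ)
    (b : EuclideanSpace ℂ (Fin n)) (m : ℕ) :
    Krylov A b m = krylovSubspace (toEuclideanLin A) b m := by
  simp only [Krylov, krylovSubspace, toLpLin_pow]

theorem pow_apply_mem_krylovSubspace {j : ℕ} (hj : j < m) : (T ^ j) b ∈ krylovSubspace T b m :=
  Submodule.subset_span ⟨j, hj, rfl⟩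

theorem aeval_apply_mem_krylovSubspace {p : R[X]} (hp : p.degree < m) :
    aeval T p b ∈ krylovSubspace T b m := by
  rw [aeval_endomorphism]
  exact Submodule.sum_mem _ fun j hj ↦ Submodule.smul_mem _ _ <| pow_apply_mem_krylovSubspace <|
    by exact_mod_cast (le_degree_of_mem_supp j hj).trans_lt hp

variable {V : N →ₗ[R] M} {W : M →ₗ[R] N}

theorem apply_apply_of_mem_range (hWV : W ∘ₗ V = LinearMap.id) {y : M}
    (hy : y ∈ LinearMap.range V) : V (W y) = y := by
  obtain ⟨u, rfl⟩ := hy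
  rw [← LinearMap.comp_apply W V, hWV, LinearMap.id_apply]

theorem compression_pow_apply (hWV : W ∘ₗ V = LinearMap.id)
    (hV : krylovSubspace T b m ≤ LinearMap.range V) {j : ℕ} (hj : j ≤ m) :
    ((W ∘ₗ T ∘ₗ V : Module.End R N) ^ j) (W b) = W ((T ^ j) b) := by
  induction j with
  | zero => rfl
  | succ j ih =>
    rw [pow_succ', Module.End.mul_apply, ih (by lia), LinearMap.comp_apply, LinearMap.comp_apply,
      apply_apply_of_mem_range hWV (hV (pow_apply_mem_krylovSubspace hj)), pow_succ',
      Module.End.mul_apply]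

theorem aeval_compression_apply (hWV : W ∘ₗ V = LinearMap.id)
    (hV : krylovSubspace T b m ≤ LinearMap.range V) {p : R[X]} (hp : p.degree ≤ m) :
    aeval (W ∘ₗ T ∘ₗ V : Module.End R N) p (W b) = W (aeval T p b) := by
  simp only [aeval_endomorphism, Polynomial.sum, map_sum, map_smul]
  exact Finset.sum_congr rfl fun j hj ↦ congrArg _ <| compression_pow_apply hWV hV <|
    by exact_mod_cast (le_degree_of_mem_supp j hj).trans hp

end Krylov

section HermitianFunctionalCalculus

open Polynomial

variable {𝕜 n : Type*} [RCLike 𝕜] [Fintype n] [DecidableEq n] {A : Matrix n n 𝕜}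
  (hA : A.IsHermitian)

theorem eigenvectorBasis_repr_cfc_apply (f : ℝ → ℝ) (v : EuclideanSpace 𝕜 n) (i : n) :
    hA.eigenvectorBasis.repr (toEuclideanLin (hA.cfc f) v) i =
      f (hA.eigenvalues i) * hA.eigenvectorBasis.repr v i := by
  have hrepr : ∀ u : EuclideanSpace 𝕜 n, hA.eigenvectorBasis.repr u i =
      (star (hA.eigenvectorUnitary : Matrix n n 𝕜) *ᵥ u.ofLp) i := fun u ↦ by
    rw [OrthonormalBasis.repr_apply_apply]
    simp [mulVec, dotProduct, PiLp.inner_apply, star_apply, mul_comm]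
  rw [hrepr, hrepr, IsHermitian.cfc, Unitary.conjStarAlgAut_apply, toLpLin_apply, mulVec_mulVec,
    ← mul_assoc, ← mul_assoc, Unitary.coe_star_mul_self, one_mul, ← mulVec_mulVec,
    mulVec_diagonal, Function.comp_apply, Function.comp_apply]

theorem norm_toEuclideanLin_cfc_le {f : ℝ → ℝ} {c : ℝ}
    (hf : ∀ i, |f (hA.eigenvalues i)| ≤ c) (v : EuclideanSpace 𝕜 n) :
    ‖toEuclideanLin (hA.cfc f) v‖ ≤ c * ‖v‖ := by
  rcases isEmpty_or_nonempty n with _ | ⟨⟨j⟩⟩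
  · simp [Subsingleton.elim _ (0 : EuclideanSpace 𝕜 n)]
  have hc : 0 ≤ c := (abs_nonneg _).trans (hf j)
  rw [← hA.eigenvectorBasis.repr.norm_map, ← hA.eigenvectorBasis.repr.norm_map v,
    ← sq_le_sq₀ (norm_nonneg _) (by positivity), mul_pow, EuclideanSpace.norm_sq_eq,
    EuclideanSpace.norm_sq_eq, Finset.mul_sum]
  refine Finset.sum_le_sum fun i _ ↦ ?_
  rw [eigenvectorBasis_repr_cfc_apply, norm_mul, mul_pow, RCLike.norm_ofReal]
  gcongr
  exact hf i

theorem mul_norm_sq_le_re_inner_toEuclideanLin_cfc {f : ℝ → ℝ} {c : ℝ}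
    (hf : ∀ i, c ≤ f (hA.eigenvalues i)) (v : EuclideanSpace 𝕜 n) :
    c * ‖v‖ ^ 2 ≤ RCLike.re (inner 𝕜 v (toEuclideanLin (hA.cfc f) v)) := by
  rw [← hA.eigenvectorBasis.repr.norm_map v, ← hA.eigenvectorBasis.repr.inner_map_map,
    EuclideanSpace.norm_sq_eq, Finset.mul_sum, PiLp.inner_apply, map_sum]
  refine Finset.sum_le_sum fun i _ ↦ ?_
  rw [eigenvectorBasis_repr_cfc_apply, ← smul_eq_mul (_ : 𝕜), inner_smul_right,
    RCLike.re_ofReal_mul, inner_self_eq_norm_sq]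
  gcongr
  exact hf i

theorem toEuclideanLin_cfc_eq_aeval {f : ℝ → ℝ} {p : ℝ[X]}
    (h : ∀ i, p.eval (hA.eigenvalues i) = f (hA.eigenvalues i)) :
    toEuclideanLin (hA.cfc f) = aeval (toEuclideanLin A) (p.map (algebraMap ℝ 𝕜)) := by
  have hf : Set.EqOn f p.eval (spectrum ℝ A) := by
    rw [hA.spectrum_real_eq_range_eigenvalues, Set.eqOn_range]
    exact funext fun i ↦ (h i).symm
  have hcfc : hA.cfc f = aeval A p := by
    rw [← hA.cfc_eq, cfc_congr hf]
    exact cfc_polynomial p A hA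
  rw [hcfc, aeval_map_algebraMap]
  exact (aeval_algHom_apply ((toLpLinAlgEquiv 2 (R := 𝕜)).toAlgHom.restrictScalars ℝ) A p).symm

end HermitianFunctionalCalculus

section Lanczos

open Polynomial

variable {𝕜 : Type*} [RCLike 𝕜]

theorem norm_le_mul_norm_add_of_inner_eq_zero {E : Type*} [NormedAddCommGroup E]
    [InnerProductSpace 𝕜 E] {w e u : E} {α β κ : ℝ} (hκ : 0 ≤ κ) (hβ : β ≤ κ * α)
    (hu : inner 𝕜 w u = 0) (hα : α * ‖w‖ ^ 2 ≤ RCLike.re (inner 𝕜 w e)) (he : ‖e‖ ≤ β * ‖w‖) :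
    ‖e‖ ≤ κ * ‖e + u‖ := by
  rcases (norm_nonneg w).eq_or_lt with hw | hw
  · rw [← hw, mul_zero] at he
    exact he.trans (by positivity)
  have hαw : α * ‖w‖ ≤ ‖e + u‖ := by
    refine le_of_mul_le_mul_left ?_ hw
    calc ‖w‖ * (α * ‖w‖) = α * ‖w‖ ^ 2 := by ring
      _ ≤ RCLike.re (inner 𝕜 w (e + u)) := by rwa [inner_add_right, hu, add_zero]
      _ ≤ ‖w‖ * ‖e + u‖ := re_inner_le_norm w (e + u)
  calc ‖e‖ ≤ κ * α * ‖w‖ := he.trans (by gcongr)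
    _ = κ * (α * ‖w‖) := by ring
    _ ≤ κ * ‖e + u‖ := by gcongr

variable {n ι : Type*} [Fintype n] [Fintype ι] [DecidableEq ι] {A : Matrix n n 𝕜}
  {V : Matrix n ι 𝕜}

/-- The Ritz values of `A` with respect to the columns of `V`: the eigenvalues of `V* A V`, which
are the interpolation nodes of the Lanczos approximation. -/
noncomputable abbrev ritzValue (hA : A.IsHermitian) (V : Matrix n ι 𝕜) : ι → ℝ :=
  (isHermitian_conjTranspose_mul_mul V hA).eigenvalues

theorem ritzValue_pos (hA : A.PosDef) (hV : Vᴴ * V = 1) (i : ι) :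
    0 < ritzValue hA.isHermitian V i := by
  have hV_injective : Function.Injective V.mulVec := fun u v huv ↦ by
    simpa only [mulVec_mulVec, hV, one_mulVec] using congrArg Vᴴ.mulVec huv
  exact (hA.conjTranspose_mul_mul_same hV_injective).eigenvalues_pos i

variable [DecidableEq n] {b : EuclideanSpace 𝕜 n} {m : ℕ}

/-- The Lanczos approximation `V f(V* A V) V* b` of `f(A) b` attached to the columns of `V`. -/
noncomputable def lanczosApprox (hA : A.IsHermitian) (V : Matrix n ι 𝕜) (f : ℝ → ℝ)
    (b : EuclideanSpace 𝕜 n) : EuclideanSpace 𝕜 n :=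
  toEuclideanLin V (toEuclideanLin ((isHermitian_conjTranspose_mul_mul V hA).cfc f)
    (toEuclideanLin Vᴴ b))

theorem toEuclideanLin_conjTranspose_comp_self (hV : Vᴴ * V = 1) :
    toEuclideanLin Vᴴ ∘ₗ toEuclideanLin V = LinearMap.id := by
  rw [← toLpLin_mul_same, hV, toLpLin_one]

theorem toEuclideanLin_conjTranspose_mul_mul :
    toEuclideanLin (Vᴴ * A * V) = toEuclideanLin Vᴴ ∘ₗ toEuclideanLin A ∘ₗ toEuclideanLin V := by
  rw [toLpLin_mul_same, toLpLin_mul_same, LinearMap.comp_assoc]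

theorem lanczosApprox_eq_cfc_eval (hA : A.IsHermitian) (hV : Vᴴ * V = 1)
    (hKV : krylovSubspace (toEuclideanLin A) b m ≤ LinearMap.range (toEuclideanLin V))
    {f : ℝ → ℝ} {p : ℝ[X]} (hp : p.degree < m)
    (hpf : ∀ i, p.eval (ritzValue hA V i) = f (ritzValue hA V i)) :
    lanczosApprox hA V f b = toEuclideanLin (hA.cfc p.eval) b := by
  have hWV := toEuclideanLin_conjTranspose_comp_self hV
  have hp' : (p.map (algebraMap ℝ 𝕜)).degree < m := degree_map_le.trans_lt hp
  rw [lanczosApprox, toEuclideanLin_cfc_eq_aeval _ hpf, toEuclideanLin_conjTranspose_mul_mul,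
    aeval_compression_apply hWV hKV hp'.le,
    apply_apply_of_mem_range hWV (hKV (aeval_apply_mem_krylovSubspace hp')),
    toEuclideanLin_cfc_eq_aeval hA fun _ ↦ rfl]

theorem toEuclideanLin_conjTranspose_cfc_eval_eq_zero (hA : A.IsHermitian) (hV : Vᴴ * V = 1)
    (hKV : krylovSubspace (toEuclideanLin A) b m ≤ LinearMap.range (toEuclideanLin V))
    {q : ℝ[X]} (hq : q.degree ≤ m)
    (hq0 : ∀ i, q.eval (ritzValue hA V i) = 0) :
    toEuclideanLin Vᴴ (toEuclideanLin (hA.cfc q.eval) b) = 0 := by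
  have hT := isHermitian_conjTranspose_mul_mul V hA
  have hTq : aeval (toEuclideanLin (Vᴴ * A * V)) (q.map (algebraMap ℝ 𝕜)) = 0 := by
    rw [← toEuclideanLin_cfc_eq_aeval hT (f := fun _ ↦ 0) hq0, ← hT.cfc_eq, cfc_const_zero,
      map_zero]
  rw [toEuclideanLin_cfc_eq_aeval hA fun _ ↦ rfl,
    ← aeval_compression_apply (toEuclideanLin_conjTranspose_comp_self hV) hKV
      (degree_map_le.trans hq), ← toEuclideanLin_conjTranspose_mul_mul, hTq, LinearMap.zero_apply]

theorem norm_cfc_sub_lanczosApprox_le (hA : A.IsHermitian) (hV : Vᴴ * V = 1)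
    (hKV : krylovSubspace (toEuclideanLin A) b m ≤ LinearMap.range (toEuclideanLin V))
    {f r : ℝ → ℝ} {p q : ℝ[X]} (hp : p.degree < m) (hq : q.degree ≤ m)
    (hpf : ∀ i, p.eval (ritzValue hA V i) = f (ritzValue hA V i))
    (hq0 : ∀ i, q.eval (ritzValue hA V i) = 0)
    (hr : ∀ i, f (hA.eigenvalues i) - p.eval (hA.eigenvalues i) =
      r (hA.eigenvalues i) * q.eval (hA.eigenvalues i))
    {α β κ : ℝ} (hα : 0 ≤ α) (hrαβ : ∀ i, r (hA.eigenvalues i) ∈ Set.Icc α β)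
    (hκ : 0 ≤ κ) (hαβ : β ≤ κ * α)
    {x : EuclideanSpace 𝕜 n} (hx : x ∈ LinearMap.range (toEuclideanLin V)) :
    ‖toEuclideanLin (hA.cfc f) b - lanczosApprox hA V f b‖ ≤
      κ * ‖toEuclideanLin (hA.cfc f) b - x‖ := by
  set w := toEuclideanLin (hA.cfc q.eval) b with hw
  have herr : toEuclideanLin (hA.cfc f) b - lanczosApprox hA V f b =
      toEuclideanLin (hA.cfc r) w := by
    refine hA.eigenvectorBasis.repr.injective <| PiLp.ext fun i ↦ ?_
    rw [lanczosApprox_eq_cfc_eval hA hV hKV hp hpf, map_sub, PiLp.sub_apply, hw]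
    simp only [eigenvectorBasis_repr_cfc_apply]
    rw [← sub_mul, ← RCLike.ofReal_sub, hr, RCLike.ofReal_mul, mul_assoc]
  have horth : inner 𝕜 w (lanczosApprox hA V f b - x) = 0 := by
    obtain ⟨u, hu⟩ := Submodule.sub_mem _ (LinearMap.mem_range_self _ _) hx
    rw [lanczosApprox, ← hu, ← LinearMap.adjoint_inner_left,
      ← toEuclideanLin_conjTranspose_eq_adjoint,
      toEuclideanLin_conjTranspose_cfc_eval_eq_zero hA hV hKV hq hq0, inner_zero_left]
  rw [← sub_add_sub_cancel _ (lanczosApprox hA V f b) x, herr]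
  exact norm_le_mul_norm_add_of_inner_eq_zero hκ hαβ horth
    (mul_norm_sq_le_re_inner_toEuclideanLin_cfc hA (fun i ↦ (hrαβ i).1) w)
    (norm_toEuclideanLin_cfc_le hA
      (fun i ↦ (abs_of_nonneg (hα.trans (hrαβ i).1)).trans_le (hrαβ i).2) w)

theorem lanczos_near_instance_optimality_zStieltjes_general [Nonempty ι] (hA : A.IsHermitian)
    {a c : ℝ} (ha : 0 < a) (hac : ∀ i, hA.eigenvalues i ∈ Set.Icc a c) {g : ℝ → ℝ}
    (hg : IsStieltjes g) (hV : Vᴴ * V = 1) (hι : Fintype.card ι ≤ m)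
    (hKV : krylovSubspace (toEuclideanLin A) b m ≤ LinearMap.range (toEuclideanLin V))
    {x : EuclideanSpace 𝕜 n} (hx : x ∈ LinearMap.range (toEuclideanLin V)) :
    ‖toEuclideanLin (hA.cfc fun z ↦ z * g z) b - lanczosApprox hA V (fun z ↦ z * g z) b‖ ≤
      c / a * ‖toEuclideanLin (hA.cfc fun z ↦ z * g z) b - x‖ := by
  rcases isEmpty_or_nonempty n with _ | ⟨⟨j⟩⟩
  · simp [Subsingleton.elim _ (0 : EuclideanSpace 𝕜 n)]
  have hc : 0 < c := ha.trans_le <| (hac j).1.trans (hac j).2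
  have hpos : ∀ i, 0 < hA.eigenvalues i := fun i ↦ ha.trans_le (hac i).1
  let s := Finset.univ.image (ritzValue hA V)
  have hmem : ∀ i, ritzValue hA V i ∈ s := fun i ↦ Finset.mem_image_of_mem _ (Finset.mem_univ i)
  have hs : ∀ θ ∈ s, 0 < θ := Finset.forall_mem_image.2 fun i _ ↦
    ritzValue_pos (hA.posDef_iff_eigenvalues_pos.2 hpos) hV i
  have hcard : (s.card : WithBot ℕ) ≤ m := by exact_mod_cast Finset.card_image_le.trans hι
  obtain ⟨h, hh, herr⟩ := hg.exists_interpolation_error_eq (Finset.univ_nonempty.image _) hs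
  refine norm_cfc_sub_lanczosApprox_le hA hV hKV (r := h)
    (q := C (-(-1) ^ s.card) * Lagrange.nodal s id)
    ((Lagrange.degree_interpolate_lt _ (Set.injOn_id _)).trans_le hcard)
    ((degree_C_mul (by simp)).trans_le (Lagrange.degree_nodal.trans_le hcard))
    (fun i ↦ Lagrange.eval_interpolate_at_node _ (Set.injOn_id _) (hmem i))
    (fun i ↦ eval_mul.trans <|
      mul_eq_zero_of_right _ <| Lagrange.eval_nodal_at_node (v := id) (hmem i))
    (fun i ↦ by rw [eval_mul, eval_C]; exact herr _ (hpos i))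
    (hh.nonneg hc)
    (fun i ↦ ⟨hh.antitoneOn (hpos i) hc (hac i).2, hh.antitoneOn ha (hpos i) (hac i).1⟩)
    (by positivity) ?_ hx
  rw [div_mul_eq_mul_div, le_div_iff₀' ha]
  exact hh.monotoneOn_id_mul ha hc ((hac j).1.trans (hac j).2)

end Lanczos

/-- **Near instance optimality of Lanczos for `z` times Stieltjes functions** (Theorem 4.1 with bound (3.2))
(Theorem 3.1, bound (3.2)): if `A` is Hermitian positive definite, `‖b‖ = 1`, `f(z) = z·g(z)`
with `g` a Stieltjes function and `V` has orthonormal columns spanning `K_m(A,b)`, then the Lanczos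
approximation `f_m = V f(V* A V) V* b` satisfies
`‖f(A)b − f_m‖ ≤ (1 + κ(A)²) ‖f(A)b − x‖` for every `x ∈ K_m(A,b)`. -/
theorem lanczos_near_instance_optimality_zStieltjes
    {n m : ℕ} (hm : 1 ≤ m)
    (A : Matrix (Fin n) (Fin n) ℂ) (hA : A.IsHermitian) (hApd : A.PosDef)
    (lmin lmax : ℝ)
    (hlmin_mem : ∃ i, hA.eigenvalues i = lmin) (hlmin : ∀ i, lmin ≤ hA.eigenvalues i)
    (hlmax_mem : ∃ i, hA.eigenvalues i = lmax) (hlmax : ∀ i, hA.eigenvalues i ≤ lmax)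
    (b : EuclideanSpace ℂ (Fin n)) (hb : ‖b‖ = 1)
    (g : ℝ → ℝ) (hg : IsStieltjes g) (f : ℝ → ℝ) (hf : ∀ z : ℝ, f z = z * g z)
    (V : Matrix (Fin n) (Fin m) ℂ)
    (hVorth : Vᴴ * V = 1)
    (hVspan : LinearMap.range (Matrix.toEuclideanLin V) = Krylov A b m)
    (fm : EuclideanSpace ℂ (Fin n))
    (hfm : fm = Matrix.toEuclideanLin V
      (Matrix.toEuclideanLin ((Matrix.isHermitian_conjTranspose_mul_mul V hA).cfc f)
        (Matrix.toEuclideanLin Vᴴ b)))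
    (x : EuclideanSpace ℂ (Fin n)) (hx : x ∈ Krylov A b m) :
    ‖Matrix.toEuclideanLin (hA.cfc f) b - fm‖ ≤
      (1 + (lmax / lmin) ^ 2) * ‖Matrix.toEuclideanLin (hA.cfc f) b - x‖ := by
  obtain rfl : f = fun z ↦ z * g z := funext hf
  rw [Krylov_eq_krylovSubspace] at hVspan hx
  have : Nonempty (Fin m) := ⟨⟨0, hm⟩⟩
  have hlmin_pos : 0 < lmin := by
    obtain ⟨i, rfl⟩ := hlmin_mem
    exact hApd.eigenvalues_pos i
  have hκ : lmax / lmin ≤ 1 + (lmax / lmin) ^ 2 := by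
    nlinarith only [sq_nonneg (lmax / lmin - 1), sq_nonneg (lmax / lmin)]
  calc ‖toEuclideanLin (hA.cfc fun z ↦ z * g z) b - fm‖
      = ‖toEuclideanLin (hA.cfc fun z ↦ z * g z) b - lanczosApprox hA V (fun z ↦ z * g z) b‖ := by
        rw [hfm, lanczosApprox]
    _ ≤ lmax / lmin * ‖toEuclideanLin (hA.cfc fun z ↦ z * g z) b - x‖ :=
        lanczos_near_instance_optimality_zStieltjes_general hA hlmin_pos
          (fun i ↦ ⟨hlmin i, hlmax i⟩) hg hVorth (Fintype.card_fin m).le hVspan.ge (hVspan ▸ hx)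
    _ ≤ _ := by gcongr
end

section
/- In the block matrix setup, for every t ≥ 0 it holds that d(t) ≠ 0 and, writing (T + tI)⁻¹ e_1^{(m+k)} = (x(t); z(t)) with x(t) ∈ ℝ^m and z(t) ∈ ℝ^k, one has z(t) = (ε(t) / (β d(t))) · (S + tI)⁻¹ e_1^{(k)}. -/
open Matrix

/-!
Couple two invertible diagonal blocks `A` and `B` by the rank-one blocks `u vᵀ` and `w rᵀ`.
If `(x; z)` is mapped to `(f; 0)`, then `x = A⁻¹ f - (v ⬝ z) A⁻¹ u` and `z = -(r ⬝ x) B⁻¹ w`, and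
eliminating the scalar `r ⬝ x` gives `κ z = (r ⬝ A⁻¹ f) B⁻¹ w` with
`κ = (r ⬝ A⁻¹ u) (v ⬝ B⁻¹ w) - 1`. For `f = u`, pairing with `v` yields `κ (v ⬝ z) = κ + 1`, so the
solvability of this one system already makes `κ` invertible. For the coupling entry `β`, one has
`κ = β² d`.
-/

section RankOneCoupling

variable {R n p : Type*} [CommRing R] [Fintype n] [DecidableEq n] [Fintype p] [DecidableEq p]
  {A : Matrix n n R} {B : Matrix p p R} {u r : n → R} {v w : p → R}

theorem eq_inv_mulVec_of_mulVec_eq (hA : IsUnit A) {x y : n → R} (h : A *ᵥ x = y) :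
    x = A⁻¹ *ᵥ y :=
  letI := hA.invertible
  (inv_mulVec_eq_vec h.symm).symm

theorem smul_comp_inr_eq_of_fromBlocks_vecMulVec_mulVec_eq (hA : IsUnit A) (hB : IsUnit B)
    {f : n → R} {y : n ⊕ p → R}
    (hy : fromBlocks A (vecMulVec u v) (vecMulVec w r) B *ᵥ y = Sum.elim f 0) :
    ((r ⬝ᵥ A⁻¹ *ᵥ u) * (v ⬝ᵥ B⁻¹ *ᵥ w) - 1) • (y ∘ Sum.inr) =
      (r ⬝ᵥ A⁻¹ *ᵥ f) • B⁻¹ *ᵥ w := by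
  set x := y ∘ Sum.inl
  set z := y ∘ Sum.inr
  obtain ⟨hupper, hlower⟩ : A *ᵥ x + (v ⬝ᵥ z) • u = f ∧ (r ⬝ᵥ x) • w + B *ᵥ z = 0 := by
    simpa only [fromBlocks_mulVec, vecMulVec_mulVec, op_smul_eq_smul, Sum.elim_eq_iff] using hy
  have hx : x = A⁻¹ *ᵥ f - (v ⬝ᵥ z) • A⁻¹ *ᵥ u := by
    rw [eq_inv_mulVec_of_mulVec_eq hA (eq_sub_of_add_eq hupper), mulVec_sub, mulVec_smul]
  have hz : z = -(r ⬝ᵥ x) • B⁻¹ *ᵥ w := by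
    rw [eq_inv_mulVec_of_mulVec_eq hB (eq_neg_of_add_eq_zero_right hlower), mulVec_neg,
      mulVec_smul, neg_smul]
  have hrx : r ⬝ᵥ x = r ⬝ᵥ A⁻¹ *ᵥ f - (v ⬝ᵥ z) * (r ⬝ᵥ A⁻¹ *ᵥ u) := by
    conv_lhs => rw [hx]
    rw [dotProduct_sub, dotProduct_smul, smul_eq_mul]
  have hvz : v ⬝ᵥ z = -(r ⬝ᵥ x) * (v ⬝ᵥ B⁻¹ *ᵥ w) := by
    conv_lhs => rw [hz]
    rw [dotProduct_smul, smul_eq_mul]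
  rw [hz, smul_smul]
  congr 1
  linear_combination hrx - (r ⬝ᵥ A⁻¹ *ᵥ u) * hvz

theorem isUnit_mul_sub_one_of_isUnit_fromBlocks_vecMulVec (hA : IsUnit A) (hB : IsUnit B)
    (hM : IsUnit (fromBlocks A (vecMulVec u v) (vecMulVec w r) B)) :
    IsUnit ((r ⬝ᵥ A⁻¹ *ᵥ u) * (v ⬝ᵥ B⁻¹ *ᵥ w) - 1) := by
  obtain ⟨y, hy⟩ := mulVec_surjective_iff_isUnit.2 hM (Sum.elim u 0)
  have hvz := congrArg (v ⬝ᵥ ·) (smul_comp_inr_eq_of_fromBlocks_vecMulVec_mulVec_eq hA hB hy)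
  simp only [dotProduct_smul, smul_eq_mul] at hvz
  exact .of_mul_eq_one (v ⬝ᵥ (y ∘ Sum.inr) - 1) (by linear_combination hvz)

end RankOneCoupling

section SingleEntryCoupling

variable {n p : Type*} [DecidableEq n] [DecidableEq p]

theorem single_eq_vecMulVec {R : Type*} [Semiring R] (i : n) (j : p) (a : R) :
    single i j a = vecMulVec (a • Pi.single i 1) (Pi.single j 1) := by
  rw [smul_vecMulVec, ← single_eq_single_vecMulVec_single, smul_single, smul_eq_mul, mul_one]

theorem of_ite_eq_single {R : Type*} [Zero R] (i : n) (j : p) (a : R) :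
    of (fun i' j' => if i' = i ∧ j' = j then a else 0) = single i j a := by
  ext
  simp only [of_apply, single_apply, eq_comm]

theorem woodbury_bottom_block_general {K : Type*} [Field K] [Fintype n] [Fintype p]
    {T₁ : Matrix n n K} {S : Matrix p p K} {T : Matrix (n ⊕ p) (n ⊕ p) K} {b c t : K}
    {i l : n} {j : p} (hb : b ≠ 0) (hc : c ≠ 0)
    (hT : T = fromBlocks T₁ (single i j b) (single j i c) S)
    (hTt : IsUnit (T + t • 1)) (hT₁t : IsUnit (T₁ + t • 1)) (hSt : IsUnit (S + t • 1))
    {γ δ ε d : K} (hγ : γ = (T₁ + t • 1)⁻¹ i i) (hδ : δ = (S + t • 1)⁻¹ j j)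
    (hε : ε = (T₁ + t • 1)⁻¹ i l) (hd : d = γ * δ - 1 / (b * c)) :
    d ≠ 0 ∧ ((T + t • 1)⁻¹ *ᵥ Pi.single (Sum.inl l) 1) ∘ Sum.inr =
      (ε / (b * d)) • (S + t • 1)⁻¹ *ᵥ Pi.single j 1 := by
  have hM : T + t • 1 = fromBlocks (T₁ + t • 1) (vecMulVec (b • Pi.single i 1) (Pi.single j 1))
      (vecMulVec (c • Pi.single j 1) (Pi.single i 1)) (S + t • 1) := by
    rw [hT, ← fromBlocks_one, fromBlocks_smul, fromBlocks_add, smul_zero, smul_zero, add_zero,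
      add_zero, single_eq_vecMulVec, single_eq_vecMulVec]
  have hκ : (Pi.single i 1 ⬝ᵥ (T₁ + t • 1)⁻¹ *ᵥ b • Pi.single i 1) *
      (Pi.single j 1 ⬝ᵥ (S + t • 1)⁻¹ *ᵥ c • Pi.single j 1) - 1 = b * c * d := by
    simp only [mulVec_smul, mulVec_single_one, dotProduct_smul, single_one_dotProduct, col_apply,
      smul_eq_mul, ← hγ, ← hδ, hd]
    field_simp
  have hd0 : d ≠ 0 := by
    have hκ0 := (isUnit_mul_sub_one_of_isUnit_fromBlocks_vecMulVec hT₁t hSt (hM ▸ hTt)).ne_zero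
    exact right_ne_zero_of_mul (hκ ▸ hκ0)
  have hy : (T + t • 1) *ᵥ (T + t • 1)⁻¹ *ᵥ Pi.single (Sum.inl l) 1 =
      Sum.elim (Pi.single l 1) 0 := by
    rw [mulVec_mulVec, mul_nonsing_inv _ ((isUnit_iff_isUnit_det _).1 hTt), one_mulVec,
      Sum.elim_single_zero]
  set y := (T + t • 1)⁻¹ *ᵥ Pi.single (Sum.inl l) 1
  have hz : (b * c * d) • (y ∘ Sum.inr) = (ε * c) • (S + t • 1)⁻¹ *ᵥ Pi.single j 1 := by
    rw [← hκ, smul_comp_inr_eq_of_fromBlocks_vecMulVec_mulVec_eq hT₁t hSt (hM ▸ hy),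
      single_one_dotProduct, mulVec_single_one, col_apply, ← hε, mulVec_smul, smul_smul]
  refine ⟨hd0, smul_right_injective _ (mul_ne_zero (mul_ne_zero hb hc) hd0) ?_⟩
  have hcoef : b * c * d * (ε / (b * d)) = ε * c := by field_simp
  simp only [hz, smul_smul, hcoef]

end SingleEntryCoupling

theorem isUnit_add_smul_one_of_posDef {K n : Type*} [Field K] [PartialOrder K] [StarRing K]
    [StarOrderedRing K] [Fintype n] [DecidableEq n] {M : Matrix n n K} (hM : M.PosDef) {t : K}
    (ht : 0 ≤ t) : IsUnit (M + t • 1) :=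
  (hM.add_posSemidef (PosSemidef.one.smul ht)).isUnit

/-- **Lemma 3.3, formula (3.14)**: in the block matrix setup
`T = [[T₁, β e_m e₁ᵀ], [β e₁ e_mᵀ, S]]` with `T` positive definite, for every `t ≥ 0` the
determinant `d(t) = γ(t)δ(t) − 1/β²` of the Woodbury capacitance matrix is nonzero and,
writing `(T + tI)⁻¹ e₁ = (x(t); z(t))`, one has
`z(t) = (ε(t) / (β d(t))) (S + tI)⁻¹ e₁`. -/
theorem woodbury_bottom_block
    {m k : ℕ} (hm : 1 ≤ m) (hk : 1 ≤ k)
    (T₁ : Matrix (Fin m) (Fin m) ℝ) (S : Matrix (Fin k) (Fin k) ℝ)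
    (hT₁ : T₁.IsSymm) (hS : S.IsSymm)
    (β : ℝ) (hβ : 0 < β)
    (T : Matrix (Fin m ⊕ Fin k) (Fin m ⊕ Fin k) ℝ)
    (hT : T = Matrix.fromBlocks T₁
      (Matrix.of fun i j => if i = (⟨m - 1, by omega⟩ : Fin m) ∧ j = (⟨0, hk⟩ : Fin k) then β else 0)
      (Matrix.of fun i j => if i = (⟨0, hk⟩ : Fin k) ∧ j = (⟨m - 1, by omega⟩ : Fin m) then β else 0)
      S)
    (hTpd : T.PosDef)
    (γ δ ε d : ℝ → ℝ)
    (hγ : ∀ t, γ t = (T₁ + t • 1)⁻¹ ⟨m - 1, by omega⟩ ⟨m - 1, by omega⟩)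
    (hδ : ∀ t, δ t = (S + t • 1)⁻¹ ⟨0, hk⟩ ⟨0, hk⟩)
    (hε : ∀ t, ε t = (T₁ + t • 1)⁻¹ ⟨m - 1, by omega⟩ ⟨0, hm⟩)
    (hd : ∀ t, d t = γ t * δ t - 1 / β ^ 2)
    (t : ℝ) (ht : 0 ≤ t)
    (z : Fin k → ℝ)
    (hz : ∀ j, z j = (T + t • 1)⁻¹.mulVec (Pi.single (Sum.inl ⟨0, hm⟩) 1) (Sum.inr j)) :
    d t ≠ 0 ∧
      z = (ε t / (β * d t)) • (S + t • 1)⁻¹.mulVec (Pi.single ⟨0, hk⟩ 1) := by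
  rw [of_ite_eq_single, of_ite_eq_single] at hT
  have hT₁pd : T₁.PosDef := by subst hT; exact hTpd.submatrix Sum.inl_injective
  have hSpd : S.PosDef := by subst hT; exact hTpd.submatrix Sum.inr_injective
  obtain rfl := funext hz
  exact woodbury_bottom_block_general hβ.ne' hβ.ne' hT (isUnit_add_smul_one_of_posDef hTpd ht)
    (isUnit_add_smul_one_of_posDef hT₁pd ht) (isUnit_add_smul_one_of_posDef hSpd ht)
    (hγ t) (hδ t) (hε t) (sq β ▸ hd t)
end

section
/- In the block matrix setup, for every t ≥ 0 one has γ(t) > 0, δ(t) > 0, and γ(t)δ(t) < 1/β²; moreover γ(t) ≤ γ(0) and δ(t) ≤ δ(0), so that −1/β² ≤ d(t) ≤ γ(0)δ(0) − 1/β² < 0 for all t ≥ 0. -/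
open Matrix

/-!
The Schur complement of `A` in `[[A, β u vᴴ], [β̄ v uᴴ, S]]` is a rank-one perturbation of `S`, so
by the matrix determinant lemma the determinant of the whole matrix is
`det A * det S * (1 - |β|² (uᴴ A⁻¹ u) (vᴴ S⁻¹ v))`. Positivity of the determinants of `A`, `S` and
the whole matrix is the bound at `t = 0`. It propagates to `t ≥ 0` because inversion reverses the
Loewner order, so that `uᴴ (A + t)⁻¹ u` decreases in `t`.
-/

section Determinant

variable {R n p : Type*} [CommRing R] [Fintype n] [DecidableEq n] [Fintype p] [DecidableEq p]

theorem det_sub_vecMulVec {A : Matrix n n R} (hA : IsUnit A.det) (u v : n → R) :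
    (A - vecMulVec u v).det = A.det * (1 - v ⬝ᵥ A⁻¹ *ᵥ u) := by
  rw [sub_eq_add_neg, ← neg_vecMulVec, vecMulVec_eq Unit,
    det_add_replicateCol_mul_replicateRow hA, Matrix.mul_assoc, ← replicateCol_mulVec,
    det_unique (n := Unit), Matrix.add_apply, replicateRow_mul_replicateCol_apply, one_apply_eq,
    mulVec_neg, dotProduct_neg, ← sub_eq_add_neg]

theorem det_fromBlocks_vecMulVec {A : Matrix n n R} {S : Matrix p p R} (hA : IsUnit A.det)
    (hS : IsUnit S.det) (u z : n → R) (v w : p → R) :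
    (fromBlocks A (vecMulVec u v) (vecMulVec w z) S).det =
      A.det * S.det * (1 - (z ⬝ᵥ A⁻¹ *ᵥ u) * (v ⬝ᵥ S⁻¹ *ᵥ w)) := by
  let : Invertible A := A.invertibleOfIsUnitDet hA
  have schur_complement : S - vecMulVec w z * ⅟A * vecMulVec u v =
      S - vecMulVec ((z ⬝ᵥ A⁻¹ *ᵥ u) • w) v := by
    rw [invOf_eq_nonsing_inv, Matrix.mul_assoc, mul_vecMulVec, vecMulVec_mul_vecMulVec,
      vecMulVec_smul, smul_vecMulVec]
  rw [det_fromBlocks₁₁, schur_complement, det_sub_vecMulVec hS, mulVec_smul, dotProduct_smul,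
    smul_eq_mul, mul_assoc]

end Determinant

theorem posSemidef_inv_sub_inv {K n : Type*} [Field K] [PartialOrder K] [StarRing K]
    [StarOrderedRing K] [Fintype n] [DecidableEq n] {A B : Matrix n n K} (hA : A.PosDef)
    (hAB : (B - A).PosSemidef) : (A⁻¹ - B⁻¹).PosSemidef := by
  have hB : B.PosDef := add_sub_cancel A B ▸ hA.add_posSemidef hAB
  let : Invertible A := hA.isUnit.invertible
  let : Invertible B := hB.isUnit.invertible
  let : Invertible A⁻¹ := hA.inv.isUnit.invertible
  -- `B - A` and `A⁻¹ - B⁻¹` are the two Schur complements of `[[B, 1], [1, A⁻¹]]`.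
  have hblock : (fromBlocks B 1 1ᴴ A⁻¹).PosSemidef :=
    (PosDef.fromBlocks₂₂ B 1 hA.inv).mpr (by simpa using hAB)
  simpa using (PosDef.fromBlocks₁₁ 1 A⁻¹ hB).mp hblock

theorem of_ite_eq_smul_vecMulVec_single {R n p : Type*} [Semiring R] [StarRing R] [DecidableEq n]
    [DecidableEq p] (i : n) (j : p) (β : R) :
    Matrix.of (fun i' j' => if i' = i ∧ j' = j then β else 0) =
      β • vecMulVec (Pi.single i 1) (star (Pi.single j 1)) := by
  ext i' j'
  simp [vecMulVec_apply, Pi.single_apply, ← ite_and, and_comm]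

section ResolventForm

open scoped ComplexOrder

variable {𝕜 n p : Type*} [RCLike 𝕜] [DecidableEq n] [DecidableEq p]

theorem posDef_add_smul_one {A : Matrix n n 𝕜} (hA : A.PosDef) {t : ℝ} (ht : 0 ≤ t) :
    (A + t • (1 : Matrix n n 𝕜)).PosDef :=
  hA.add_posSemidef (PosSemidef.one.smul ht)

variable [Fintype n] [Fintype p]

theorem sq_norm_mul_dotProduct_inv_mulVec_lt_one {A : Matrix n n 𝕜} {S : Matrix p p 𝕜}
    {u : n → 𝕜} {v : p → 𝕜} {β : 𝕜}
    (hT : (fromBlocks A (β • vecMulVec u (star v)) (star β • vecMulVec v (star u)) S).PosDef) :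
    (‖β‖ : 𝕜) ^ 2 * ((star u ⬝ᵥ A⁻¹ *ᵥ u) * (star v ⬝ᵥ S⁻¹ *ᵥ v)) < 1 := by
  have hA : 0 < A.det := PosDef.det_pos (hT.submatrix Sum.inl_injective)
  have hS : 0 < S.det := PosDef.det_pos (hT.submatrix Sum.inr_injective)
  have hdet := hT.det_pos
  rw [← smul_vecMulVec, ← smul_vecMulVec,
    det_fromBlocks_vecMulVec hA.ne'.isUnit hS.ne'.isUnit] at hdet
  have hpos := sub_pos.mp (pos_of_mul_pos_right hdet (mul_pos hA hS).le)
  calc (‖β‖ : 𝕜) ^ 2 * ((star u ⬝ᵥ A⁻¹ *ᵥ u) * (star v ⬝ᵥ S⁻¹ *ᵥ v))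
      = (star u ⬝ᵥ A⁻¹ *ᵥ (β • u)) * (star v ⬝ᵥ S⁻¹ *ᵥ (star β • v)) := by
        rw [← RCLike.mul_conj, mulVec_smul, mulVec_smul, dotProduct_smul, dotProduct_smul,
          smul_eq_mul, smul_eq_mul, starRingEnd_apply]
        ring
    _ < 1 := hpos

/-- The quadratic form `uᴴ (A + t)⁻¹ u` of the resolvent of `-A`, as a function of the real shift
`t`. For `u` a standard basis vector it is a diagonal entry of `(A + t)⁻¹`, such as `γ(t)` or
`δ(t)`. -/
noncomputable def resolventForm (A : Matrix n n 𝕜) (u : n → 𝕜) (t : ℝ) : 𝕜 :=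
  star u ⬝ᵥ (A + t • 1)⁻¹ *ᵥ u

theorem resolventForm_zero (A : Matrix n n 𝕜) (u : n → 𝕜) :
    resolventForm A u 0 = star u ⬝ᵥ A⁻¹ *ᵥ u := by
  rw [resolventForm, zero_smul, add_zero]

theorem resolventForm_single_one (A : Matrix n n 𝕜) (i : n) (t : ℝ) :
    resolventForm A (Pi.single i 1) t = (A + t • 1)⁻¹ i i := by
  simp [resolventForm]

theorem resolventForm_pos {A : Matrix n n 𝕜} (hA : A.PosDef) {u : n → 𝕜} (hu : u ≠ 0) {t : ℝ}
    (ht : 0 ≤ t) : 0 < resolventForm A u t :=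
  (posDef_add_smul_one hA ht).inv.dotProduct_mulVec_pos hu

theorem antitoneOn_resolventForm {A : Matrix n n 𝕜} (hA : A.PosDef) (u : n → 𝕜) :
    AntitoneOn (resolventForm A u) (Set.Ici 0) := by
  intro s hs t _ hst
  have hshift : (A + t • 1 - (A + s • 1)).PosSemidef := by
    rw [add_sub_add_left_eq_sub, ← sub_smul]
    exact PosSemidef.one.smul (sub_nonneg.mpr hst)
  have hinv := posSemidef_inv_sub_inv (posDef_add_smul_one hA hs) hshift
  have hform := hinv.dotProduct_mulVec_nonneg u
  rwa [sub_mulVec, dotProduct_sub, sub_nonneg] at hform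

theorem capacitance_determinant_bounds_general {A : Matrix n n 𝕜} {S : Matrix p p 𝕜}
    {u : n → 𝕜} {v : p → 𝕜} (hu : u ≠ 0) (hv : v ≠ 0) {β : 𝕜} (hβ : β ≠ 0)
    (hT : (fromBlocks A (β • vecMulVec u (star v)) (star β • vecMulVec v (star u)) S).PosDef)
    {γ δ d : ℝ → 𝕜} (hγ : ∀ t, γ t = resolventForm A u t) (hδ : ∀ t, δ t = resolventForm S v t)
    (hd : ∀ t, d t = γ t * δ t - 1 / (‖β‖ : 𝕜) ^ 2) {t : ℝ} (ht : 0 ≤ t) :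
    0 < γ t ∧ 0 < δ t ∧ γ t * δ t < 1 / (‖β‖ : 𝕜) ^ 2 ∧
      γ t ≤ γ 0 ∧ δ t ≤ δ 0 ∧
      -(1 / (‖β‖ : 𝕜) ^ 2) ≤ d t ∧ d t ≤ γ 0 * δ 0 - 1 / (‖β‖ : 𝕜) ^ 2 ∧
      γ 0 * δ 0 - 1 / (‖β‖ : 𝕜) ^ 2 < 0 := by
  obtain rfl : γ = resolventForm A u := funext hγ
  obtain rfl : δ = resolventForm S v := funext hδ
  have hA : A.PosDef := hT.submatrix Sum.inl_injective
  have hS : S.PosDef := hT.submatrix Sum.inr_injective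
  have hγpos := resolventForm_pos hA hu ht
  have hδpos := resolventForm_pos hS hv ht
  have hγle := antitoneOn_resolventForm hA u Set.self_mem_Ici ht ht
  have hδle := antitoneOn_resolventForm hS v Set.self_mem_Ici ht ht
  have hmul := mul_le_mul hγle hδle hδpos.le (hγpos.le.trans hγle)
  have hlt : resolventForm A u 0 * resolventForm S v 0 < 1 / (‖β‖ : 𝕜) ^ 2 := by
    have hsq : 0 < (‖β‖ : 𝕜) ^ 2 := pow_pos (RCLike.ofReal_pos.mpr (norm_pos_iff.mpr hβ)) 2
    rw [lt_div_iff₀' hsq, resolventForm_zero, resolventForm_zero]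
    exact sq_norm_mul_dotProduct_inv_mulVec_lt_one hT
  rw [hd]
  exact ⟨hγpos, hδpos, hmul.trans_lt hlt, hγle, hδle,
    by simpa using (mul_pos hγpos hδpos).le, sub_le_sub_right hmul _, sub_neg.mpr hlt⟩

end ResolventForm

/-- **From the proof of Lemma 3.4**: in the block matrix setup
`T = [[T₁, β e_m e₁ᵀ], [β e₁ e_mᵀ, S]]` with `T` positive definite, for every `t ≥ 0` one
has `γ(t) > 0`, `δ(t) > 0`, `γ(t)δ(t) < 1/β²`, `γ(t) ≤ γ(0)`, `δ(t) ≤ δ(0)`, and hence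
`−1/β² ≤ d(t) ≤ γ(0)δ(0) − 1/β² < 0`. -/
theorem capacitance_determinant_bounds
    {m k : ℕ} (hm : 1 ≤ m) (hk : 1 ≤ k)
    (T₁ : Matrix (Fin m) (Fin m) ℝ) (S : Matrix (Fin k) (Fin k) ℝ)
    (hT₁ : T₁.IsSymm) (hS : S.IsSymm)
    (β : ℝ) (hβ : 0 < β)
    (T : Matrix (Fin m ⊕ Fin k) (Fin m ⊕ Fin k) ℝ)
    (hT : T = Matrix.fromBlocks T₁
      (Matrix.of fun i j => if i = (⟨m - 1, by omega⟩ : Fin m) ∧ j = (⟨0, hk⟩ : Fin k) then β else 0)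
      (Matrix.of fun i j => if i = (⟨0, hk⟩ : Fin k) ∧ j = (⟨m - 1, by omega⟩ : Fin m) then β else 0)
      S)
    (hTpd : T.PosDef)
    (γ δ ε d : ℝ → ℝ)
    (hγ : ∀ t, γ t = (T₁ + t • 1)⁻¹ ⟨m - 1, by omega⟩ ⟨m - 1, by omega⟩)
    (hδ : ∀ t, δ t = (S + t • 1)⁻¹ ⟨0, hk⟩ ⟨0, hk⟩)
    (hε : ∀ t, ε t = (T₁ + t • 1)⁻¹ ⟨m - 1, by omega⟩ ⟨0, hm⟩)
    (hd : ∀ t, d t = γ t * δ t - 1 / β ^ 2)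
    (t : ℝ) (ht : 0 ≤ t) :
    0 < γ t ∧ 0 < δ t ∧ γ t * δ t < 1 / β ^ 2 ∧
      γ t ≤ γ 0 ∧ δ t ≤ δ 0 ∧
      -(1 / β ^ 2) ≤ d t ∧ d t ≤ γ 0 * δ 0 - 1 / β ^ 2 ∧ γ 0 * δ 0 - 1 / β ^ 2 < 0 := by
  rw [hT, of_ite_eq_smul_vecMulVec_single, of_ite_eq_smul_vecMulVec_single] at hTpd
  simpa using capacitance_determinant_bounds_general (by simp) (by simp) hβ.ne' hTpd
    (by simpa only [resolventForm_single_one]) (by simpa only [resolventForm_single_one])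
    (by simpa using hd) ht
end
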